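/- For every non-empty compact set K of non-negative real numbers, there exists a non-empty family 𝓕 of finite graphs, each having at least one edge, such that the set of accumulation points of the sequence (sat(n,𝓕)/n)_{n ≥ 1} is exactly K. -/

import Mathlib

open SimpleGraph Filter Topology

/-- `H` (on `β`) is contained in `G` (on `α`): `G` has a subgraph isomorphic to `H`. -/
def Contains {α β : Type*} (G : SimpleGraph α) (H : SimpleGraph β) : Prop :=
  ∃ f : β ↪ α, ∀ a b : β, H.Adj a b → G.Adj (f a) (f b)

/-- A family of finite graphs, each given on a vertex set `Fin n`. -/
abbrev GraphFam := Set ((n : ℕ) × SimpleGraph (Fin n))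

/-- `G` is `𝓕`-saturated: `G` contains no member of `𝓕`, but adding any missing edge to `G`
creates a member of `𝓕`. -/
def FamSaturated (𝓕 : GraphFam) {α : Type*} (G : SimpleGraph α) : Prop :=
  (∀ F ∈ 𝓕, ¬ Contains G F.2) ∧
    ∀ u v : α, u ≠ v → ¬ G.Adj u v →
      ∃ F ∈ 𝓕, Contains (G ⊔ SimpleGraph.fromEdgeSet {s(u, v)}) F.2

/-- `sat n 𝓕` is the minimum number of edges in an `𝓕`-saturated graph on `n` vertices. -/
noncomputable def sat (n : ℕ) (𝓕 : GraphFam) : ℕ :=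
  sInf {m | ∃ G : SimpleGraph (Fin n), FamSaturated 𝓕 G ∧ Nat.card G.edgeSet = m}

/-!
Let `Y n` be a *marker* for `n`, a graph all of whose degrees exceed `d`, and let `G n` be a graph
on `n` vertices that contains `Y n` but no earlier marker. Forbid, on every number `m` of vertices,
the graphs that contain a marker of index at most `m` and do not embed in `G m`. A graph on `n`
vertices avoiding all of them either embeds in `G n` or contains no marker of index at most `n`. A
saturated graph of the first kind has as many edges as `G n`. In one of the second kind a missing
edge at `u` creates a marker through `u`, so every degree is at least `d`. Hence if `G n` has at
most `n * d / 2` edges, the saturation number is exactly the number of edges of `G n`.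

Markers with `o(n)` edges leave the rest of `G n` free to carry any prescribed linear number of
edges, so `sat n / n` can follow any bounded non-negative sequence up to `o(1)`. It remains to pick
a sequence that visits each point of a countable dense subset of `K` infinitely often.
-/

section Containment

variable {α β γ : Type*}

theorem contains_iff_isContained {G : SimpleGraph α} {H : SimpleGraph β} :
    Contains G H ↔ H ⊑ G :=
  ⟨fun ⟨f, hf⟩ => ⟨⟨⟨f, hf _ _⟩, f.injective⟩⟩,
    fun ⟨f⟩ => ⟨f.toEmbedding, fun _ _ h => f.toHom.map_adj h⟩⟩

theorem card_edgeSet_le_of_isContained [Finite α] {G : SimpleGraph α} {H : SimpleGraph β}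
    (h : H ⊑ G) : Nat.card H.edgeSet ≤ Nat.card G.edgeSet :=
  let ⟨f⟩ := h
  Nat.card_le_card_of_injective _ f.mapEdgeSet.injective

theorem free_of_lt [Finite α] {G H : SimpleGraph α} (h : G < H) : H.Free G := fun hc =>
  (Set.ncard_lt_ncard (edgeSet_ssubset_edgeSet.2 h)).not_ge (card_edgeSet_le_of_isContained hc)

theorem free_of_degree_lt {G : SimpleGraph α} {H : SimpleGraph β} [G.LocallyFinite]
    [H.LocallyFinite] [Nonempty β] (h : ∀ a b, G.degree a < H.degree b) : H.Free G :=
  fun ⟨f⟩ => (f.degree_le (Classical.arbitrary β)).not_gt (h _ _)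

theorem exists_le_card_edgeSet_eq [Finite α] (G : SimpleGraph α) {e : ℕ}
    (he : e ≤ Nat.card G.edgeSet) : ∃ H ≤ G, Nat.card H.edgeSet = e := by
  obtain ⟨S, hS, rfl⟩ := Set.exists_subset_card_eq he
  have hedge : (fromEdgeSet S).edgeSet = S := by
    rw [edgeSet_fromEdgeSet, sdiff_eq_left]
    exact Set.disjoint_left.2 fun _ he => G.edgeSet_subset_compl_diagSet (hS he)
  refine ⟨fromEdgeSet S, ?_, by rw [hedge, Nat.card_coe_set_eq]⟩
  rwa [← edgeSet_subset_edgeSet, hedge]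

theorem isContained_of_range_subset {A : SimpleGraph γ} {G : SimpleGraph α} {H : SimpleGraph β}
    (f : Copy A H) (e : G ↪g H) (h : ∀ c, ∃ a, f c = e a) : A ⊑ G := by
  choose g hg using h
  refine ⟨⟨⟨g, fun {c d} hcd => e.map_adj_iff.1 ?_⟩, fun c d hcd => f.injective ?_⟩⟩
  · exact hg c ▸ hg d ▸ f.toHom.map_adj hcd
  · exact (hg c).trans ((congrArg e hcd).trans (hg d).symm)

theorem isContained_sum_iff {A : SimpleGraph γ} (hA : A.Preconnected) {G : SimpleGraph α}
    {H : SimpleGraph β} : A ⊑ G ⊕g H ↔ A ⊑ G ∨ A ⊑ H := by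
  constructor
  · rintro ⟨f⟩
    have hnot {c d : γ} {a : α} {b : β} (hc : f c = .inl a) (hd : f d = .inr b) : False :=
      not_reachable_sum_inl_inr a b (hc ▸ hd ▸ (hA c d).map f.toHom)
    by_cases hinl : ∀ c, ∃ a, f c = .inl a
    · exact Or.inl (isContained_of_range_subset f Embedding.sumInl hinl)
    · push Not at hinl
      obtain ⟨d, hd⟩ := hinl
      obtain ⟨b, hb⟩ : ∃ b, f d = .inr b := by
        rcases hfd : f d with a | b
        exacts [absurd hfd (hd a), ⟨b, rfl⟩]
      refine Or.inr (isContained_of_range_subset f Embedding.sumInr fun c => ?_)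
      rcases hc : f c with a | b'
      exacts [(hnot hc hb).elim, ⟨b', rfl⟩]
  · rintro (h | h)
    · exact h.trans Embedding.sumInl.isContained
    · exact h.trans Embedding.sumInr.isContained

theorem copy_surjective_of_degree_le {A : SimpleGraph α} {B : SimpleGraph β} [A.LocallyFinite]
    [B.LocallyFinite] [Nonempty α] (hB : B.Preconnected) (f : Copy A B)
    (hdeg : ∀ a, B.degree (f a) ≤ A.degree a) : Function.Surjective f := by
  have hnbr (a : α) : Function.Surjective (f.mapNeighborSet a) := by
    refine ((Fintype.bijective_iff_injective_and_card _).2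
      ⟨(f.mapNeighborSet a).injective, ?_⟩).surjective
    simpa only [card_neighborSet_eq_degree] using (f.degree_le a).antisymm (hdeg a)
  intro y
  have hy := hB (f (Classical.arbitrary α)) y
  rw [reachable_iff_reflTransGen] at hy
  induction hy with
  | refl => exact ⟨_, rfl⟩
  | @tail x z _ hadj ih =>
    obtain ⟨a, rfl⟩ := ih
    obtain ⟨b, hb⟩ := hnbr a ⟨z, hadj⟩
    exact ⟨b, congrArg Subtype.val hb⟩

theorem card_eq_of_isContained_of_isRegularOfDegree {A : SimpleGraph α} {B : SimpleGraph β}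
    [A.LocallyFinite] [B.LocallyFinite] [Nonempty α] {d : ℕ} (hA : A.IsRegularOfDegree d)
    (hB : B.IsRegularOfDegree d) (hconn : B.Preconnected) (h : A ⊑ B) :
    Nat.card α = Nat.card β := by
  obtain ⟨f⟩ := h
  have hsurj := copy_surjective_of_degree_le hconn f fun a => by rw [hA.degree_eq, hB.degree_eq]
  exact Nat.card_eq_of_bijective f ⟨f.injective, hsurj⟩

end Containment

section Degrees

variable {α β : Type*}

theorem sum_degree_eq_two_mul_card_edgeSet [Fintype α] (G : SimpleGraph α) [DecidableRel G.Adj] :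
    ∑ v, G.degree v = 2 * Nat.card G.edgeSet := by
  rw [sum_degrees_eq_twice_card_edges, edgeFinset_card, Nat.card_eq_fintype_card]

theorem two_mul_card_edgeSet_of_isRegularOfDegree [Fintype α] {G : SimpleGraph α}
    [G.LocallyFinite] {d : ℕ} (hG : G.IsRegularOfDegree d) :
    2 * Nat.card G.edgeSet = Fintype.card α * d := by
  classical
  rw [← sum_degree_eq_two_mul_card_edgeSet,
    Finset.sum_eq_card_nsmul fun v _ => by convert hG.degree_eq v, Finset.card_univ, smul_eq_mul]

theorem ne_top_of_two_mul_card_edgeSet_le [Fintype α] {G : SimpleGraph α} {d : ℕ}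
    (hd : d + 1 < Fintype.card α) (hG : 2 * Nat.card G.edgeSet ≤ Fintype.card α * d) : G ≠ ⊤ := by
  classical
  rintro rfl
  rw [two_mul_card_edgeSet_of_isRegularOfDegree IsRegularOfDegree.top] at hG
  have := Nat.le_of_mul_le_mul_left hG (by omega)
  omega

theorem card_edgeSet_sum [Finite α] [Finite β] (G : SimpleGraph α) (H : SimpleGraph β) :
    Nat.card (G ⊕g H).edgeSet = Nat.card G.edgeSet + Nat.card H.edgeSet := by
  rw [Nat.card_congr edgeSetSumEquiv, Nat.card_sum]

theorem isRegularOfDegree_sum {G : SimpleGraph α} {H : SimpleGraph β} [G.LocallyFinite]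
    [H.LocallyFinite] [(G ⊕g H).LocallyFinite] {d : ℕ} (hG : G.IsRegularOfDegree d)
    (hH : H.IsRegularOfDegree d) : (G ⊕g H).IsRegularOfDegree d := by
  rintro (v | v)
  · rw [← hG.degree_eq v, ← card_neighborSet_eq_degree, ← card_neighborSet_eq_degree,
      ← Nat.card_eq_fintype_card, ← Nat.card_eq_fintype_card, neighborSet_sum_inl,
      Nat.card_image_of_injective Sum.inl_injective]
  · rw [← hH.degree_eq v, ← card_neighborSet_eq_degree, ← card_neighborSet_eq_degree,
      ← Nat.card_eq_fintype_card, ← Nat.card_eq_fintype_card, neighborSet_sum_inr,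
      Nat.card_image_of_injective Sum.inr_injective]

theorem degree_sup_edge_le [Fintype α] (G : SimpleGraph α) (u v : α) [DecidableRel G.Adj]
    [DecidableRel (G ⊔ edge u v).Adj] : (G ⊔ edge u v).degree u ≤ G.degree u + 1 := by
  classical
  refine (Finset.card_le_card fun w hw => ?_).trans (Finset.card_insert_le v _)
  simp only [mem_neighborFinset, sup_adj, edge_adj] at hw
  simp only [Finset.mem_insert, mem_neighborFinset]
  tauto

theorem exists_degree_le_of_isContained_sup_edge [Fintype α] {G : SimpleGraph α}
    {H : SimpleGraph β} [DecidableRel G.Adj] [H.LocallyFinite] {u v : α} (hfree : H.Free G)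
    (h : H ⊑ G ⊔ edge u v) : ∃ b, H.degree b ≤ G.degree u + 1 := by
  classical
  obtain ⟨f⟩ := h
  by_cases hu : ∃ b, f b = u
  · obtain ⟨b, hb⟩ := hu
    exact ⟨b, (f.degree_le b).trans (by rw [hb]; exact degree_sup_edge_le G u v)⟩
  · push Not at hu
    refine absurd ⟨⟨⟨f, fun {a b} hab => ?_⟩, f.injective⟩⟩ hfree
    have := f.toHom.map_adj hab
    simpa [edge_adj, hu] using this

end Degrees

section FamSaturated

variable {𝓕 : GraphFam} {α : Type*} {G M : SimpleGraph α}

theorem famSaturated_iff :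
    FamSaturated 𝓕 G ↔ (∀ F ∈ 𝓕, F.2.Free G) ∧
      ∀ u v, u ≠ v → ¬ G.Adj u v → ∃ F ∈ 𝓕, F.2 ⊑ G ⊔ edge u v := by
  simp only [FamSaturated, contains_iff_isContained, SimpleGraph.Free, edge]

theorem FamSaturated.eq_of_le (hM : FamSaturated 𝓕 M) (hG : ∀ F ∈ 𝓕, F.2.Free G)
    (hle : M ≤ G) : M = G := by
  refine le_antisymm hle fun u v huv => ?_
  by_contra hnadj
  obtain ⟨F, hF, hc⟩ := (famSaturated_iff.1 hM).2 u v huv.ne hnadj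
  exact hG F hF (hc.mono_right (sup_le hle ((edge_le_iff G).2 (Or.inr huv))))

theorem FamSaturated.card_edgeSet_eq [Finite α] (hM : FamSaturated 𝓕 M)
    (hG : ∀ F ∈ 𝓕, F.2.Free G) (h : M ⊑ G) : Nat.card M.edgeSet = Nat.card G.edgeSet := by
  obtain ⟨f⟩ := h
  let σ := Equiv.ofBijective f (Finite.injective_iff_bijective.1 f.injective)
  let i : G.comap σ ≃g G := Iso.comap σ G
  have hM' : M = G.comap σ :=
    hM.eq_of_le (fun F hF hc => hG F hF (hc.trans i.isContained)) fun _ _ h => f.toHom.map_adj h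
  rw [hM', Nat.card_congr i.mapEdgeSet]

end FamSaturated

/-- The graphs on `m` vertices that contain a marker `Y j` with `N ≤ j ≤ m` and are not contained
in the prescribed graph `G m`. It is designed to make `G n` a sparsest saturated graph on `n`
vertices, for `N ≤ n`. -/
def markedFamily {V : ℕ → Type*} (Y : ∀ n, SimpleGraph (V n)) (G : ∀ n, SimpleGraph (Fin n))
    (N : ℕ) : GraphFam :=
  {F | (∃ j, N ≤ j ∧ j ≤ F.1 ∧ Y j ⊑ F.2) ∧ F.2.Free (G F.1)}

namespace markedFamily

variable {V : ℕ → Type*} {Y : ∀ n, SimpleGraph (V n)} {G : ∀ n, SimpleGraph (Fin n)} {N n : ℕ}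

theorem one_le_card_edgeSet {F : (n : ℕ) × SimpleGraph (Fin n)} (hF : F ∈ markedFamily Y G N) :
    1 ≤ Nat.card F.2.edgeSet := by
  have hne : F.2 ≠ ⊥ := fun h => hF.2 (.of_le (h ▸ bot_le))
  have := (edgeSet_nonempty.2 hne).to_subtype
  exact Nat.card_pos

theorem top_mem (hn : N ≤ n) (hY : Y n ⊑ G n) (hG : G n ≠ ⊤) :
    ⟨n, ⊤⟩ ∈ markedFamily Y G N :=
  ⟨⟨n, hn, le_rfl, hY.mono_right le_top⟩, free_of_lt hG.lt_top⟩

theorem forall_free_iff (hfree : ∀ j, N ≤ j → j < n → (Y j).Free (G n))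
    {M : SimpleGraph (Fin n)} :
    (∀ F ∈ markedFamily Y G N, F.2.Free M) ↔ M ⊑ G n ∨ ∀ j, N ≤ j → j ≤ n → (Y j).Free M := by
  constructor
  · refine fun h => or_iff_not_imp_left.2 fun hMG j hj hjn hYM => ?_
    exact h ⟨n, M⟩ ⟨⟨j, hj, hjn, hYM⟩, hMG⟩ .rfl
  · rintro h ⟨m, F⟩ ⟨⟨j, hj, hjm, hYF⟩, hFG⟩ hFM
    have hmn : m ≤ n := by
      obtain ⟨f⟩ := hFM
      simpa using Fintype.card_le_of_embedding f.toEmbedding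
    rcases h with hMG | hYM
    · rcases hmn.eq_or_lt with rfl | hlt
      · exact hFG (hFM.trans hMG)
      · exact hfree j hj (hjm.trans_lt hlt) (hYF.trans (hFM.trans hMG))
    · exact hYM j hj (hjm.trans hmn) (hYF.trans hFM)

theorem famSaturated (hfree : ∀ j, N ≤ j → j < n → (Y j).Free (G n)) (hn : N ≤ n)
    (hY : Y n ⊑ G n) : FamSaturated (markedFamily Y G N) (G n) := by
  refine famSaturated_iff.2 ⟨(forall_free_iff hfree).2 (Or.inl .rfl), fun u v hne huv => ?_⟩
  have hlt := (G n).lt_sup_edge _ _ hne huv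
  exact ⟨⟨n, G n ⊔ edge u v⟩, ⟨⟨n, hn, le_rfl, hY.mono_right hlt.le⟩, free_of_lt hlt⟩, .rfl⟩

theorem le_degree [∀ j, (Y j).LocallyFinite] {d : ℕ} (hdeg : ∀ j b, d < (Y j).degree b)
    (hd : d < n) {M : SimpleGraph (Fin n)} [DecidableRel M.Adj]
    (hM : FamSaturated (markedFamily Y G N) M) (hYM : ∀ j, N ≤ j → j ≤ n → (Y j).Free M)
    (u : Fin n) : d ≤ M.degree u := by
  by_cases hu : ∃ v, u ≠ v ∧ ¬ M.Adj u v
  · obtain ⟨v, hne, huv⟩ := hu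
    obtain ⟨F, ⟨⟨j, hj, hjF, hYF⟩, -⟩, hc⟩ := (famSaturated_iff.1 hM).2 u v hne huv
    have hFn : F.1 ≤ n := by
      obtain ⟨f⟩ := hc
      simpa using Fintype.card_le_of_embedding f.toEmbedding
    obtain ⟨b, hb⟩ :=
      exists_degree_le_of_isContained_sup_edge (hYM j hj (hjF.trans hFn)) (hYF.trans hc)
    exact Nat.lt_add_one_iff.1 ((hdeg j b).trans_le hb)
  · push Not at hu
    have : M.degree u = n - 1 := by
      simpa using (M.degree_eq_card_sub_one u).2 hu
    omega

theorem sat_eq [∀ j, (Y j).LocallyFinite] {d : ℕ} (hdeg : ∀ j b, d < (Y j).degree b)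
    (hfree : ∀ j, N ≤ j → j < n → (Y j).Free (G n)) (hn : N ≤ n) (hd : d < n)
    (hY : Y n ⊑ G n) (hG : 2 * Nat.card (G n).edgeSet ≤ n * d) :
    sat n (markedFamily Y G N) = Nat.card (G n).edgeSet := by
  classical
  have hsat := famSaturated hfree hn hY
  refine le_antisymm (Nat.sInf_le ⟨G n, hsat, rfl⟩) (le_csInf ⟨_, G n, hsat, rfl⟩ ?_)
  rintro _ ⟨M, hM, rfl⟩
  rcases (forall_free_iff hfree).1 (famSaturated_iff.1 hM).1 with hMG | hYM
  · exact (hM.card_edgeSet_eq (famSaturated_iff.1 hsat).1 hMG).ge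
  · have hsum : n * d ≤ 2 * Nat.card M.edgeSet := by
      rw [← sum_degree_eq_two_mul_card_edgeSet]
      simpa using Finset.card_nsmul_le_sum Finset.univ (fun u => M.degree u) d fun u _ =>
        le_degree hdeg hd hM hYM u
    omega

end markedFamily

section Rings

variable {α : Type*} {W : SimpleGraph α} {t m n : ℕ}

/-- The Cartesian product of the cycle of length `m` and the clique on `t` vertices. -/
abbrev cliqueRing (t m : ℕ) : SimpleGraph (Fin m × Fin t) :=
  cycleGraph m □ (⊤ : SimpleGraph (Fin t))

theorem cliqueRing_preconnected : (cliqueRing t m).Preconnected :=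
  cycleGraph_preconnected.boxProd preconnected_top

theorem isRegularOfDegree_cliqueRing (hm : 3 ≤ m) :
    (cliqueRing t m).IsRegularOfDegree (t + 1) := by
  obtain ⟨m, rfl⟩ := Nat.exists_eq_add_of_le' hm
  intro x
  have := x.2.pos
  rw [degree_boxProd, cycleGraph_degree_three_le, complete_graph_degree, Fintype.card_fin]
  omega

theorem eq_of_cliqueRing_isContained {k : ℕ} (ht : 0 < t) (hm : 3 ≤ m) (hk : 3 ≤ k)
    (h : cliqueRing t m ⊑ cliqueRing t k) : m = k := by
  have : Nonempty (Fin m × Fin t) := ⟨⟨0, by omega⟩, ⟨0, ht⟩⟩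
  have hcard := card_eq_of_isContained_of_isRegularOfDegree (isRegularOfDegree_cliqueRing hm)
    (isRegularOfDegree_cliqueRing hk) cliqueRing_preconnected h
  exact Nat.eq_of_mul_eq_mul_right ht (by simpa using hcard)

/-- Two disjoint clique rings whose lengths encode `n`: the even length gives the first coordinate
of `n.unpair`, the odd length the second. -/
abbrev marker (t n : ℕ) :
    SimpleGraph ((Fin (2 * n.unpair.1 + 4) × Fin t) ⊕ (Fin (2 * n.unpair.2 + 5) × Fin t)) :=
  cliqueRing t (2 * n.unpair.1 + 4) ⊕g cliqueRing t (2 * n.unpair.2 + 5)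

/-- The total length of the two rings of a marker, that is, its number of vertices divided
by `t`. -/
def markerLength (n : ℕ) : ℕ :=
  (2 * n.unpair.1 + 4) + (2 * n.unpair.2 + 5)

theorem isRegularOfDegree_marker : (marker t n).IsRegularOfDegree (t + 1) :=
  isRegularOfDegree_sum (isRegularOfDegree_cliqueRing (by omega))
    (isRegularOfDegree_cliqueRing (by omega))

theorem two_mul_card_edgeSet_marker :
    2 * Nat.card (marker t n).edgeSet = markerLength n * t * (t + 1) := by
  rw [two_mul_card_edgeSet_of_isRegularOfDegree isRegularOfDegree_marker]
  simp [markerLength, add_mul]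

theorem eq_of_marker_isContained {j : ℕ} (ht : 0 < t)
    (hW : ∀ m, 3 ≤ m → (cliqueRing t m).Free W) (h : marker t j ⊑ marker t n ⊕g W) : j = n := by
  have hring {m : ℕ} (hm : 3 ≤ m) (hc : cliqueRing t m ⊑ marker t n ⊕g W) :
      m = 2 * n.unpair.1 + 4 ∨ m = 2 * n.unpair.2 + 5 := by
    rcases (isContained_sum_iff cliqueRing_preconnected).1 hc with hc | hc
    · exact ((isContained_sum_iff cliqueRing_preconnected).1 hc).imp
        (eq_of_cliqueRing_isContained ht hm (by omega))
        (eq_of_cliqueRing_isContained ht hm (by omega))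
    · exact (hW m hm hc).elim
  have heven := hring (by omega) (Embedding.sumInl.isContained.trans h)
  have hodd := hring (by omega) (Embedding.sumInr.isContained.trans h)
  rw [← Nat.pair_unpair j, ← Nat.pair_unpair n]
  congr 1 <;> omega

end Rings

section Band

variable {s w : ℕ}

/-- The graph on `Fin w` joining distinct vertices at distance at most `s`: a graph of maximum
degree at most `2 * s` with about `s * w` edges. -/
def bandGraph (s w : ℕ) : SimpleGraph (Fin w) where
  Adj i j := i ≠ j ∧ (i : ℕ) ≤ j + s ∧ (j : ℕ) ≤ i + s
  symm := ⟨fun _ _ h => ⟨h.1.symm, h.2.2, h.2.1⟩⟩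
  loopless := ⟨fun _ h => h.1 rfl⟩

instance : DecidableRel (bandGraph s w).Adj := fun _ _ => by
  unfold bandGraph; infer_instance

theorem degree_bandGraph_le (i : Fin w) : (bandGraph s w).degree i ≤ 2 * s := by
  have hsub : ((bandGraph s w).neighborFinset i).map Fin.valEmbedding ⊆
      (Finset.Icc (i - s : ℕ) (i + s)).erase i := by
    intro k hk
    obtain ⟨j, hj, rfl⟩ := Finset.mem_map.1 hk
    obtain ⟨hne, hij, hji⟩ := (mem_neighborFinset _ _ _).1 hj
    simp only [Fin.valEmbedding_apply, Finset.mem_erase, Finset.mem_Icc]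
    omega
  have hcard := Finset.card_le_card hsub
  rw [Finset.card_map, card_neighborFinset_eq_degree, Finset.card_erase_of_mem (by simp),
    Nat.card_Icc] at hcard
  omega

theorem mul_le_card_edgeSet_bandGraph :
    s * w ≤ Nat.card (bandGraph s w).edgeSet + s * s := by
  let g (p : Fin (w - s) × Fin s) : (bandGraph s w).edgeSet :=
    ⟨s(⟨p.1, by omega⟩, ⟨p.1 + 1 + p.2, by omega⟩), by
      simp only [mem_edgeSet, bandGraph, ne_eq, Fin.mk.injEq]
      omega⟩
  have hg : Function.Injective g := by
    rintro ⟨i, j⟩ ⟨i', j'⟩ h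
    simp only [g, Subtype.mk.injEq, Sym2.eq_iff, Fin.mk.injEq] at h
    ext <;> simp only <;> omega
  have hcard : (w - s) * s ≤ Nat.card (bandGraph s w).edgeSet := by
    simpa using Nat.card_le_card_of_injective g hg
  calc s * w ≤ s * (w - s + s) := Nat.mul_le_mul_left s (by omega)
    _ = (w - s) * s + s * s := by ring
    _ ≤ _ := by gcongr

end Band

theorem exists_marked_graph {s n e : ℕ} (hs : 0 < s)
    (he : e + s * (markerLength n * (2 * s) + s) ≤ s * n) :
    ∃ G : SimpleGraph (Fin n), marker (2 * s) n ⊑ G ∧ (∀ j < n, (marker (2 * s) j).Free G) ∧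
      Nat.card G.edgeSet = Nat.card (marker (2 * s) n).edgeSet + e := by
  obtain ⟨w, hw⟩ : ∃ w, n = markerLength n * (2 * s) + w :=
    Nat.exists_eq_add_of_le (by nlinarith)
  have heband : e ≤ Nat.card (bandGraph s w).edgeSet := by
    have := mul_le_card_edgeSet_bandGraph (s := s) (w := w)
    nlinarith
  obtain ⟨W, hWle, hWe⟩ := exists_le_card_edgeSet_eq _ heband
  have hWfree (m : ℕ) (hm : 3 ≤ m) : (cliqueRing (2 * s) m).Free W := by
    have : Nonempty (Fin m × Fin (2 * s)) := ⟨⟨0, by omega⟩, ⟨0, by omega⟩⟩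
    refine fun hc => free_of_degree_lt (fun i x => ?_) (hc.mono_right hWle)
    rw [isRegularOfDegree_cliqueRing hm]
    exact Nat.lt_succ_of_le (degree_bandGraph_le i)
  let i := (marker (2 * s) n ⊕g W).overFinIso (n := n) <| by
    simp only [Fintype.card_sum, Fintype.card_prod, Fintype.card_fin, ← add_mul]
    exact hw.symm
  refine ⟨_, Embedding.sumInl.isContained.trans i.isContained, fun j hj hc => ?_, ?_⟩
  · exact hj.ne (eq_of_marker_isContained (by omega) hWfree (hc.trans i.symm.isContained))
  · rw [← Nat.card_congr i.mapEdgeSet, card_edgeSet_sum, hWe]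

section Asymptotics

open Asymptotics

theorem eventually_mul_markerLength_le (C : ℕ) : ∀ᶠ n in atTop, C * markerLength n ≤ n := by
  filter_upwards [eventually_ge_atTop (16 * C ^ 2 + 18 * C)] with n hn
  have hmax : max n.unpair.1 n.unpair.2 ^ 2 ≤ n := by
    simpa using le_of_add_le_left (Nat.max_sq_add_min_le_pair n.unpair.1 n.unpair.2)
  have hlen : markerLength n ≤ 4 * max n.unpair.1 n.unpair.2 + 9 := by
    unfold markerLength
    omega
  have hamgm := two_mul_le_add_sq (max n.unpair.1 n.unpair.2) (4 * C)
  nlinarith [Nat.mul_le_mul_left C hlen]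

theorem isLittleO_card_edgeSet_marker (t : ℕ) :
    (fun n : ℕ => (Nat.card (marker t n).edgeSet : ℝ)) =o[atTop] fun n => (n : ℝ) := by
  refine isLittleO_iff_nat_mul_le.2 fun k => ?_
  filter_upwards [eventually_mul_markerLength_le (k * (t * (t + 1)))] with n hn
  have hcard := two_mul_card_edgeSet_marker (t := t) (n := n)
  rw [Real.norm_natCast, Real.norm_natCast]
  norm_cast
  nlinarith

theorem eventually_exists_marked_graph {A : ℕ} {e : ℕ → ℕ} (he : ∀ n, e n ≤ A * n) :
    ∀ᶠ n in atTop, ∃ G : SimpleGraph (Fin n), marker (2 * (A + 1)) n ⊑ G ∧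
      (∀ j < n, (marker (2 * (A + 1)) j).Free G) ∧
      Nat.card G.edgeSet = Nat.card (marker (2 * (A + 1)) n).edgeSet + e n ∧
      2 * Nat.card G.edgeSet ≤ n * (2 * (A + 1)) := by
  filter_upwards [eventually_mul_markerLength_le (3 * (A + 1) ^ 2)] with n hn
  have hpos : 1 ≤ markerLength n := by
    unfold markerLength
    omega
  obtain ⟨G, hY, hfree, hcard⟩ : ∃ G : SimpleGraph (Fin n), _ :=
    exists_marked_graph (s := A + 1) (n := n) (e := e n) A.succ_pos <|
      calc e n + (A + 1) * (markerLength n * (2 * (A + 1)) + (A + 1))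
          ≤ A * n + (A + 1) * (markerLength n * (2 * (A + 1)) + markerLength n * (A + 1)) := by
            gcongr
            exacts [he n, Nat.le_mul_of_pos_left _ hpos]
        _ = A * n + 3 * (A + 1) ^ 2 * markerLength n := by ring
        _ ≤ A * n + n := by gcongr
        _ = (A + 1) * n := by ring
  refine ⟨G, hY, hfree, hcard, ?_⟩
  calc 2 * Nat.card G.edgeSet
      = markerLength n * (2 * (A + 1)) * (2 * (A + 1) + 1) + 2 * e n := by
        rw [hcard, mul_add, two_mul_card_edgeSet_marker]
    _ ≤ markerLength n * (2 * (A + 1)) * (3 * (A + 1)) + 2 * (A * n) := by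
        gcongr
        exacts [by omega, he n]
    _ = 2 * (3 * (A + 1) ^ 2 * markerLength n) + 2 * (A * n) := by ring
    _ ≤ 2 * n + 2 * (A * n) := by gcongr
    _ = n * (2 * (A + 1)) := by ring

theorem exists_graphFam_sat_sub_isLittleO {A : ℕ} {e : ℕ → ℕ} (he : ∀ n, e n ≤ A * n) :
    ∃ 𝓕 : GraphFam, 𝓕.Nonempty ∧ (∀ F ∈ 𝓕, 1 ≤ Nat.card F.2.edgeSet) ∧
      (fun n => (sat n 𝓕 : ℝ) - e n) =o[atTop] fun n => (n : ℝ) := by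
  obtain ⟨N, hN⟩ := eventually_atTop.1 <|
    (eventually_exists_marked_graph he).and (eventually_gt_atTop (2 * (A + 1) + 1))
  choose! G hY hfree hcard hle using fun n hn => (hN n hn).1
  have hsat (n : ℕ) (hn : N ≤ n) :
      sat n (markedFamily (marker (2 * (A + 1))) G N) = Nat.card (G n).edgeSet :=
    markedFamily.sat_eq (fun j b => by rw [isRegularOfDegree_marker]; exact Nat.lt_succ_self _)
      (fun j _ hjn => hfree n hn j hjn) hn (by have := (hN n hn).2; omega)
      (hY n hn) (hle n hn)
  refine ⟨markedFamily (marker (2 * (A + 1))) G N,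
    ⟨_, markedFamily.top_mem le_rfl (hY N le_rfl) <|
      ne_top_of_two_mul_card_edgeSet_le (by simpa using (hN N le_rfl).2)
        (by simpa using hle N le_rfl)⟩,
    fun F hF => markedFamily.one_le_card_edgeSet hF, ?_⟩
  refine (isLittleO_card_edgeSet_marker (2 * (A + 1))).congr' ?_ .rfl
  filter_upwards [eventually_ge_atTop N] with n hn
  rw [hsat n hn, hcard n hn, Nat.cast_add, add_sub_cancel_right]

theorem exists_graphFam_tendsto_dist {u : ℕ → ℝ} (hu : ∀ n, 0 ≤ u n)
    (hbdd : BddAbove (Set.range u)) :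
    ∃ 𝓕 : GraphFam, 𝓕.Nonempty ∧ (∀ F ∈ 𝓕, 1 ≤ Nat.card F.2.edgeSet) ∧
      Tendsto (fun n => dist ((sat n 𝓕 : ℝ) / n) (u n)) atTop (𝓝 0) := by
  obtain ⟨B, hB⟩ := hbdd
  have hunonneg (n : ℕ) : 0 ≤ u n * n := mul_nonneg (hu n) n.cast_nonneg
  have hfloor_le (n : ℕ) : ⌊u n * n⌋₊ ≤ ⌈B⌉₊ * n := by
    refine Nat.floor_le_of_le ?_
    rw [Nat.cast_mul]
    gcongr
    exact (hB ⟨n, rfl⟩).trans (Nat.le_ceil B)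
  obtain ⟨𝓕, hne, hedge, hsat⟩ := exists_graphFam_sat_sub_isLittleO hfloor_le
  have hfloor : (fun n : ℕ => (⌊u n * n⌋₊ : ℝ) - u n * n) =o[atTop] fun n => (n : ℝ) := by
    refine IsBigO.trans_isLittleO (.of_bound' (.of_forall fun n => ?_))
      (isLittleO_const_id_atTop (1 : ℝ) |>.comp_tendsto tendsto_natCast_atTop_atTop)
    simpa using Nat.abs_floor_sub_le (hunonneg n)
  refine ⟨𝓕, hne, hedge, ?_⟩
  have hlim := (hsat.add hfloor).tendsto_div_nhds_zero.abs
  rw [abs_zero] at hlim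
  refine hlim.congr' ?_
  filter_upwards [eventually_ne_atTop 0] with n hn
  rw [Real.dist_eq, sub_add_sub_cancel, sub_div, mul_div_cancel_right₀ _ (Nat.cast_ne_zero.2 hn)]

end Asymptotics

section ClusterPoints

variable {X : Type*}

theorem frequently_unpair_fst {p : ℕ → Prop} : (∃ᶠ n in atTop, p (Nat.unpair n).1) ↔ ∃ i, p i := by
  refine ⟨fun h => h.exists.imp' _ fun _ => id, fun ⟨i, hi⟩ => ?_⟩
  refine frequently_atTop.2 fun k => ⟨Nat.pair i k, Nat.right_le_pair i k, ?_⟩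
  rwa [Nat.unpair_pair]

theorem mapClusterPt_comp_unpair_fst [TopologicalSpace X] {q : ℕ → X} {x : X} :
    MapClusterPt x atTop (fun n => q (Nat.unpair n).1) ↔ x ∈ closure (Set.range q) := by
  rw [mapClusterPt_iff_frequently, mem_closure_iff_nhds]
  refine forall₂_congr fun s _ => (frequently_unpair_fst (p := fun i => q i ∈ s)).trans ?_
  simp [Set.Nonempty]

theorem mapClusterPt_iff_of_tendsto_dist [PseudoMetricSpace X] {ι : Type*} {l : Filter ι}
    {u v : ι → X} {x : X} (h : Tendsto (fun n => dist (u n) (v n)) l (𝓝 0)) :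
    MapClusterPt x l u ↔ MapClusterPt x l v := by
  simp only [mapClusterPt_iff_ultrafilter]
  exact exists_congr fun U => and_congr_right fun hU => tendsto_iff_of_dist (h.mono_left hU)

theorem mapClusterPt_iff_exists_strictMono [TopologicalSpace X] [FirstCountableTopology X]
    {u : ℕ → X} {x : X} (m : ℕ) :
    MapClusterPt x atTop u ↔
      ∃ φ : ℕ → ℕ, StrictMono φ ∧ (∀ k, m ≤ φ k) ∧ Tendsto (fun k => u (φ k)) atTop (𝓝 x) := by
  constructor
  · intro h
    obtain ⟨φ, hφ, hx⟩ := h.tendsto_subseq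
    exact ⟨fun k => φ (k + m), hφ.comp (strictMono_id.add_const m),
      fun k => (Nat.le_add_left m k).trans (hφ.id_le _), hx.comp (tendsto_add_atTop_nat m)⟩
  · rintro ⟨φ, hφ, -, hx⟩
    exact .of_comp hφ.tendsto_atTop hx.mapClusterPt

theorem exists_closure_range_eq [TopologicalSpace X] [SecondCountableTopology X] {K : Set X}
    (hne : K.Nonempty) (hK : IsClosed K) : ∃ q : ℕ → X, (∀ i, q i ∈ K) ∧
      closure (Set.range q) = K := by
  have := hne.to_subtype
  let q := TopologicalSpace.denseSeq K
  refine ⟨fun i => q i, fun i => (q i).2, ?_⟩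
  refine (closure_minimal (Set.range_subset_iff.2 fun i => (q i).2) hK).antisymm ?_
  rw [← Function.comp_def, Set.range_comp]
  exact Subtype.dense_iff.1 (TopologicalSpace.denseRange_denseSeq K)

end ClusterPoints

/-- For every non-empty compact set `K` of non-negative reals there is a family `𝓕` such that the
set of accumulation points of `(sat(n,𝓕)/n)_{n ≥ 1}` is exactly `K`. -/
theorem stmt8 (K : Set ℝ) (hne : K.Nonempty) (hcpt : IsCompact K) (hpos : ∀ x ∈ K, 0 ≤ x) :
    ∃ 𝓕 : GraphFam, 𝓕.Nonempty ∧ (∀ F ∈ 𝓕, 1 ≤ Nat.card F.2.edgeSet) ∧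
      {x : ℝ | ∃ φ : ℕ → ℕ, StrictMono φ ∧ (∀ k, 1 ≤ φ k) ∧
        Tendsto (fun k => (sat (φ k) 𝓕 : ℝ) / (φ k : ℝ)) atTop (𝓝 x)} = K := by
  obtain ⟨q, hqK, hq⟩ := exists_closure_range_eq hne hcpt.isClosed
  obtain ⟨𝓕, hF, hedge, hdist⟩ :=
    exists_graphFam_tendsto_dist (u := fun n => q n.unpair.1) (fun n => hpos _ (hqK _))
      (hcpt.bddAbove.mono (Set.range_subset_iff.2 fun n => hqK _))
  refine ⟨𝓕, hF, hedge, ?_⟩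
  ext x
  calc _ ↔ MapClusterPt x atTop fun n : ℕ => (sat n 𝓕 : ℝ) / n :=
        (mapClusterPt_iff_exists_strictMono 1).symm
    _ ↔ MapClusterPt x atTop fun n : ℕ => q n.unpair.1 := mapClusterPt_iff_of_tendsto_dist hdist
    _ ↔ x ∈ closure (Set.range q) := mapClusterPt_comp_unpair_fst
    _ ↔ x ∈ K := by rw [hq]
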